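/- Let n ≥ 2, let l₁, …, lₙ > 0 with lₙ > max_{1≤i≤n−1} l_i, and let ϱ > 0. For a tuple m = (m₁, …, m_{n−1}) of nonnegative integers with Σ_{i=1}^{n−1} m_i ≥ 1, set β(m) = (Σ_{i=1}^{n−1} (m_iπ/l_i)²)^{1/2}. For τ > 0 let A^f(τ) be the number of such tuples m satisfying (2β(m)³/ϱ³)·[((sinh(β(m)lₙ))(cosh(β(m)lₙ)) + β(m)lₙ)/(sinh²(β(m)lₙ) − β(m)²lₙ²)] ≤ τ³. Then A^f(τ)/τ^{n−1} → ω_{n−1}·(16^{1/3}·π)^{−(n−1)}·l₁⋯l_{n−1}·ϱ^{n−1} as τ → +∞. -/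

import Mathlib

open Filter

/-- `beta l m = (∑ᵢ (mᵢ π / lᵢ)²)^{1/2}` for a tuple `m` of integers. -/
noncomputable def beta {k : ℕ} (l : Fin (k + 1) → ℝ) (m : Fin k → ℕ) : ℝ :=
  Real.sqrt (∑ i : Fin k, ((m i : ℝ) * Real.pi / l i.castSucc) ^ 2)

/-- The cube of the biharmonic Steklov eigenvalue of the box associated with the
frequency `b`, height `L` and density `ϱ`:
`(2b³/ϱ³)·(sinh(bL)cosh(bL) + bL)/(sinh²(bL) − b²L²)`. -/
noncomputable def steklovCubed (b L ϱ : ℝ) : ℝ :=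
  (2 * b ^ 3 / ϱ ^ 3) *
    ((Real.sinh (b * L) * Real.cosh (b * L) + b * L) /
      (Real.sinh (b * L) ^ 2 - b ^ 2 * L ^ 2))


open MeasureTheory in
/-- Volume of the positive part of the unit ball. -/
lemma aux_volume_pos (k : ℕ) :
    (2 : ℝ) ^ k * volume.real {y : Fin k → ℝ | (∀ i, 0 < y i) ∧ ∑ i, (y i) ^ 2 ≤ 1} =
      (volume (Metric.ball (0 : EuclideanSpace ℝ (Fin k)) 1)).toReal := by
  classical
  set P : Set (Fin k → ℝ) := {y : Fin k → ℝ | (∀ i, 0 < y i) ∧ ∑ i, (y i) ^ 2 ≤ 1} with hP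
  have hPm : MeasurableSet P := by
    have h1 : MeasurableSet (⋂ i, {y : Fin k → ℝ | 0 < y i}) :=
      MeasurableSet.iInter fun i => measurableSet_lt measurable_const (measurable_pi_apply i)
    have h2 : MeasurableSet {y : Fin k → ℝ | ∑ i, (y i) ^ 2 ≤ 1} :=
      measurableSet_le (by fun_prop) measurable_const
    have : P = (⋂ i, {y : Fin k → ℝ | 0 < y i}) ∩ {y : Fin k → ℝ | ∑ i, (y i) ^ 2 ≤ 1} := by
      ext y; simp [hP]
    rw [this]; exact h1.inter h2
  let σ : Bool → ℝ := fun b => if b then -1 else 1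
  have hσ : ∀ b, σ b * σ b = 1 := by intro b; cases b <;> simp [σ]
  let R : (Fin k → Bool) → (Fin k → ℝ) → (Fin k → ℝ) := fun e y i => σ (e i) * y i
  have hR : ∀ e, MeasurePreserving (R e) := by
    intro e
    refine volume_preserving_pi (fun i => ?_)
    cases h : e i
    · have h1 : (fun y : ℝ => σ false * y) = id := by funext y; simp [σ]
      change MeasurePreserving (fun y : ℝ => σ false * y)
      rw [h1]
      exact MeasurePreserving.id (volume : Measure ℝ)
    · have h1 : (fun y : ℝ => σ true * y) = Neg.neg := by funext y; simp [σ]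
      change MeasurePreserving (fun y : ℝ => σ true * y)
      rw [h1]
      exact Measure.measurePreserving_neg (volume : Measure ℝ)
  have hvol : ∀ e, volume ((R e) ⁻¹' P) = volume P := fun e =>
    (hR e).measure_preimage hPm.nullMeasurableSet
  have hdisj : Pairwise (fun e e' => Disjoint ((R e) ⁻¹' P) ((R e') ⁻¹' P)) := by
    intro e e' hne
    rw [Set.disjoint_left]
    intro y hy hy'
    apply hne
    funext i
    have h1 := hy.1 i
    have h2 := hy'.1 i
    simp only [R, σ] at h1 h2
    cases h : e i <;> cases h' : e' i <;> simp [h, h'] at h1 h2 ⊢ <;> linarith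
  have hsum : volume (⋃ e, (R e) ⁻¹' P) = 2 ^ k * volume P := by
    rw [measure_iUnion hdisj (fun e => (hR e).measurable hPm), tsum_fintype]
    simp [hvol]
  have hB : volume {y : Fin k → ℝ | ∑ i, (y i) ^ 2 ≤ 1} =
      volume (Metric.closedBall (0 : EuclideanSpace ℝ (Fin k)) 1) := by
    rw [← (PiLp.volume_preserving_toLp (Fin k)).measure_preimage
      measurableSet_closedBall.nullMeasurableSet]
    congr 1
    ext y
    simp [EuclideanSpace.norm_eq]
  have hae : (⋃ e, (R e) ⁻¹' P) =ᵐ[volume] {y : Fin k → ℝ | ∑ i, (y i) ^ 2 ≤ 1} := by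
    have hz : ∀ᵐ y : Fin k → ℝ, ∀ i, y i ≠ 0 := by
      rw [ae_all_iff]
      intro i
      have := Measure.pi_hyperplane (fun _ : Fin k => (volume : Measure ℝ)) i 0
      rw [ae_iff]
      simpa [volume_pi] using this
    filter_upwards [hz] with y hy
    apply propext
    change y ∈ (⋃ e, (R e) ⁻¹' P) ↔ ∑ i, (y i) ^ 2 ≤ 1
    have hsq : ∀ e, ∑ i, (R e y i) ^ 2 = ∑ i, (y i) ^ 2 := by
      intro e
      refine Finset.sum_congr rfl fun i _ => ?_
      simp only [R]
      rw [mul_pow, pow_two (σ _), hσ, one_mul]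
    constructor
    · intro h
      obtain ⟨e, he⟩ := Set.mem_iUnion.1 h
      have := he.2
      rwa [hsq] at this
    · intro h
      refine Set.mem_iUnion.2 ⟨fun i => decide (y i < 0), ?_, ?_⟩
      · intro i
        rcases lt_or_gt_of_ne (hy i) with h0 | h0
        · simp [R, σ, h0]
        · simp [R, σ, h0, not_lt.2 h0.le]
      · rw [hsq]; exact h
  have hfin : 2 ^ k * volume P = volume (Metric.ball (0 : EuclideanSpace ℝ (Fin k)) 1) := by
    rw [← hsum, measure_congr hae, hB]
    rcases Nat.eq_zero_or_pos k with rfl | hk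
    · congr 1
      ext y
      simp [Subsingleton.elim y 0]
    · have : Nonempty (Fin k) := ⟨⟨0, hk⟩⟩
      have : Nontrivial (EuclideanSpace ℝ (Fin k)) := inferInstance
      exact Measure.addHaar_closedBall_eq_addHaar_ball volume 0 1
  rw [← hfin]
  simp [Measure.real]

open MeasureTheory in
lemma aux_volume (k : ℕ) (a : Fin k → ℝ) (ha : ∀ i, 0 < a i) :
    volume.real {x : Fin k → ℝ | (∀ i, 0 ≤ x i) ∧ ∑ i, (x i * a i) ^ 2 ≤ 1} =
      (volume (Metric.ball (0 : EuclideanSpace ℝ (Fin k)) 1)).toReal *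
        ((2 : ℝ)⁻¹) ^ k * (∏ i, a i)⁻¹ := by
  classical
  rw [← aux_volume_pos]
  set P : Set (Fin k → ℝ) := {y : Fin k → ℝ | (∀ i, 0 < y i) ∧ ∑ i, (y i) ^ 2 ≤ 1} with hP
  have hz : ∀ᵐ y : Fin k → ℝ, ∀ i, y i ≠ 0 := by
    rw [ae_all_iff]
    intro i
    have := Measure.pi_hyperplane (fun _ : Fin k => (volume : Measure ℝ)) i 0
    rw [ae_iff]
    simpa [volume_pi] using this
  have hdet : LinearMap.det (Matrix.toLin' (Matrix.diagonal a)) = ∏ i, a i := by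
    rw [LinearMap.det_toLin', Matrix.det_diagonal]
  have hpos : 0 < ∏ i, a i := Finset.prod_pos fun i _ => ha i
  have hae : {x : Fin k → ℝ | (∀ i, 0 ≤ x i) ∧ ∑ i, (x i * a i) ^ 2 ≤ 1} =ᵐ[volume]
      (Matrix.toLin' (Matrix.diagonal a)) ⁻¹' P := by
    filter_upwards [hz] with y hy
    apply propext
    change ((∀ i, 0 ≤ y i) ∧ ∑ i, (y i * a i) ^ 2 ≤ 1) ↔
      ((∀ i, 0 < Matrix.toLin' (Matrix.diagonal a) y i) ∧
        ∑ i, (Matrix.toLin' (Matrix.diagonal a) y i) ^ 2 ≤ 1)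
    simp only [Matrix.toLin'_apply, Matrix.mulVec_diagonal]
    refine and_congr (forall_congr' fun i => ?_) ?_
    · constructor
      · intro h; exact mul_pos (ha i) (lt_of_le_of_ne h (hy i).symm)
      · intro h; exact (pos_of_mul_pos_right h (ha i).le).le
    · simp only [mul_comm]
  rw [measureReal_congr hae, Measure.real,
    Measure.addHaar_preimage_linearMap volume (by rw [hdet]; exact hpos.ne'), hdet,
    ENNReal.toReal_mul, ENNReal.toReal_ofReal (abs_nonneg _), abs_of_pos (inv_pos.2 hpos),
    Measure.real, inv_pow]
  field_simp

lemma aux_beta_le_iff {k : ℕ} (l : Fin (k + 1) → ℝ) (m : Fin k → ℕ) {x : ℝ} (hx : 0 ≤ x) :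
    beta l m ≤ x ↔ ∑ i : Fin k, ((m i : ℝ) * Real.pi / l i.castSucc) ^ 2 ≤ x ^ 2 := by
  unfold beta
  rw [Real.sqrt_le_left hx]

lemma aux_finite {k : ℕ} (l : Fin (k + 1) → ℝ) (hl : ∀ i, 0 < l i) (x : ℝ) :
    {m : Fin k → ℕ | beta l m ≤ x}.Finite := by
  refine (Set.finite_Iic (fun i : Fin k => ⌊x * l i.castSucc / Real.pi⌋₊)).subset ?_
  intro m hm i
  have hm : beta l m ≤ x := hm
  have hx : 0 ≤ x := le_trans (Real.sqrt_nonneg _) hm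
  rw [aux_beta_le_iff l m hx] at hm
  have h1 : ((m i : ℝ) * Real.pi / l i.castSucc) ^ 2 ≤ x ^ 2 :=
    le_trans (Finset.single_le_sum
      (f := fun i : Fin k => ((m i : ℝ) * Real.pi / l i.castSucc) ^ 2)
      (fun _ _ => sq_nonneg _) (Finset.mem_univ i)) hm
  have h2 : (m i : ℝ) * Real.pi / l i.castSucc ≤ x := le_of_sq_le_sq h1 hx
  apply Nat.le_floor
  rw [div_le_iff₀ (hl _)] at h2
  rw [le_div_iff₀ Real.pi_pos]
  exact h2

open MeasureTheory Pointwise in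
lemma aux_count {k : ℕ} (l : Fin (k + 1) → ℝ) (hl : ∀ i, 0 < l i) :
    Tendsto (fun x : ℝ => (Set.ncard {m : Fin k → ℕ | beta l m ≤ x} : ℝ) / x ^ k) atTop
      (nhds ((volume (Metric.ball (0 : EuclideanSpace ℝ (Fin k)) 1)).toReal *
        ((2 : ℝ)⁻¹) ^ k * (∏ i : Fin k, Real.pi / l i.castSucc)⁻¹)) := by
  classical
  set a : Fin k → ℝ := fun i => Real.pi / l i.castSucc with ha
  have hapos : ∀ i, 0 < a i := fun i => div_pos Real.pi_pos (hl _)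
  rw [← aux_volume k a hapos]
  set s : Set (Fin k → ℝ) := {x : Fin k → ℝ | (∀ i, 0 ≤ x i) ∧ ∑ i, (x i * a i) ^ 2 ≤ 1} with hs
  have hclosed : IsClosed s := by
    have h1 : IsClosed {x : Fin k → ℝ | ∀ i, 0 ≤ x i} := by
      simp only [Set.ofPred_forall]
      exact isClosed_iInter fun i => isClosed_le continuous_const (continuous_apply i)
    have h2 : IsClosed {x : Fin k → ℝ | ∑ i, (x i * a i) ^ 2 ≤ 1} :=
      isClosed_le (by fun_prop) continuous_const
    exact h1.inter h2
  have hbdd : Bornology.IsBounded s := by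
    refine (Metric.isBounded_Icc (0 : Fin k → ℝ) (fun i => (a i)⁻¹)).subset ?_
    intro x hx
    refine ⟨fun i => hx.1 i, fun i => ?_⟩
    have h1 : (x i * a i) ^ 2 ≤ 1 ^ 2 := by
      rw [one_pow]
      exact le_trans (Finset.single_le_sum (f := fun i => (x i * a i) ^ 2)
        (fun _ _ => sq_nonneg _) (Finset.mem_univ i)) hx.2
    have h2 : x i * a i ≤ 1 := le_of_sq_le_sq h1 zero_le_one
    change x i ≤ (a i)⁻¹
    rw [← one_div, le_div_iff₀ (hapos i)]
    exact h2
  have hconv : Convex ℝ s := by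
    intro x hx y hy p q hp hq hpq
    refine ⟨fun i => ?_, ?_⟩
    · have := hx.1 i
      have := hy.1 i
      simp only [Pi.add_apply, Pi.smul_apply, smul_eq_mul]
      positivity
    · have : ∑ i, ((p • x + q • y) i * a i) ^ 2 ≤
          ∑ i, (p * (x i * a i) ^ 2 + q * (y i * a i) ^ 2) := by
        refine Finset.sum_le_sum fun i _ => ?_
        simp only [Pi.add_apply, Pi.smul_apply, smul_eq_mul]
        have hq' : q = 1 - p := by linarith
        subst hq'
        nlinarith [mul_nonneg (mul_nonneg hp hq) (sq_nonneg (x i * a i - y i * a i))]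
      refine this.trans ?_
      rw [Finset.sum_add_distrib, ← Finset.mul_sum, ← Finset.mul_sum]
      nlinarith [hx.2, hy.2]
  have h0 : (0 : Fin k → ℝ) ∈ s := by simp [hs]
  have hstar : ∀ ⦃x y : ℝ⦄, 0 < x → x ≤ y → x • s ⊆ y • s := by
    intro x y hx hxy z hz
    obtain ⟨w, hw, rfl⟩ := hz
    have hy : 0 < y := hx.trans_le hxy
    refine ⟨(x / y) • w, ?_, ?_⟩
    · exact hconv.smul_mem_of_zero_mem h0 hw ⟨by positivity, (div_le_one hy).2 hxy⟩
    · simp only [smul_smul]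
      rw [mul_div_cancel₀ _ hy.ne']
  have key := tendsto_card_div_pow_atTop_volume' s hbdd hclosed.measurableSet
    (hconv.addHaar_frontier volume) hstar
  rw [Fintype.card_fin] at key
  refine key.congr' ?_
  filter_upwards [eventually_gt_atTop 0] with x hx
  congr 2
  have hset : s ∩ x⁻¹ • (Submodule.span ℤ (Set.range (Pi.basisFun ℝ (Fin k))) : Set (Fin k → ℝ)) =
      (fun (m : Fin k → ℕ) (i : Fin k) => x⁻¹ * (m i : ℝ)) '' {m | beta l m ≤ x} := by
    have hiff : ∀ m : Fin k → ℕ, beta l m ≤ x ↔ ∑ i, (x⁻¹ * (m i : ℝ) * a i) ^ 2 ≤ 1 := by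
      intro m
      rw [aux_beta_le_iff l m hx.le]
      have : ∑ i, (x⁻¹ * (m i : ℝ) * a i) ^ 2 =
          (∑ i : Fin k, ((m i : ℝ) * Real.pi / l i.castSucc) ^ 2) / x ^ 2 := by
        rw [Finset.sum_div]
        refine Finset.sum_congr rfl fun i _ => ?_
        simp only [ha]
        field_simp
      rw [this, div_le_one (by positivity)]
    ext y
    constructor
    · rintro ⟨hy, z, hz, rfl⟩
      have hz' : ∀ i, z i ∈ Set.range (algebraMap ℤ ℝ) := by
        have := ((Pi.basisFun ℝ (Fin k)).mem_span_iff_repr_mem ℤ z).1 hz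
        simpa using this
      choose c hc using hz'
      have hcn : ∀ i, ((c i).toNat : ℝ) = z i := by
        intro i
        have h1 : 0 ≤ x⁻¹ * z i := hy.1 i
        have h2 : 0 ≤ z i := nonneg_of_mul_nonneg_right h1 (inv_pos.2 hx)
        rw [← hc i] at h2 ⊢
        have h3 : 0 ≤ c i := by simpa using h2
        have : (((c i).toNat : ℤ) : ℝ) = (c i : ℝ) := by rw [Int.toNat_of_nonneg h3]
        rw [Int.cast_natCast] at this
        exact this
      refine ⟨fun i => (c i).toNat, ?_, ?_⟩
      · change beta l _ ≤ x
        rw [hiff]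
        simp only [hcn]
        exact hy.2
      · funext i
        simp [hcn]
    · rintro ⟨m, hm, rfl⟩
      refine ⟨⟨fun i => by positivity, (hiff m).1 hm⟩, fun i => (m i : ℝ), ?_, ?_⟩
      · refine ((Pi.basisFun ℝ (Fin k)).mem_span_iff_repr_mem ℤ _).2 fun i => ⟨(m i : ℤ), ?_⟩
        simp
      · funext i; simp
  rw [Nat.card_coe_set_eq, hset, Set.ncard_image_of_injective]
  intro m m' h
  funext i
  have := congrFun h i
  simpa [hx.ne'] using this

lemma aux_den_pos {x : ℝ} (hx : 0 < x) : 0 < Real.sinh x ^ 2 - x ^ 2 := by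
  have := Real.self_lt_sinh_iff.2 hx
  nlinarith

lemma aux_lower {b L ϱ : ℝ} (hb : 0 < b) (hL : 0 < L) (hϱ : 0 < ϱ) :
    2 * b ^ 3 / ϱ ^ 3 ≤ steklovCubed b L ϱ := by
  unfold steklovCubed
  have hx : 0 < b * L := by positivity
  have hd := aux_den_pos hx
  rw [← mul_pow b L 2]
  refine le_mul_of_one_le_right (by positivity) ?_
  rw [one_le_div hd]
  have h1 : Real.sinh (b * L) < Real.cosh (b * L) := Real.sinh_lt_cosh _
  have h2 : 0 < Real.sinh (b * L) := Real.sinh_pos_iff.2 hx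
  nlinarith [sq_nonneg (b * L)]

lemma aux_upper {L ϱ c : ℝ} (hL : 0 < L) (hϱ : 0 < ϱ) (hc : 1 < c) :
    ∃ B : ℝ, 0 < B ∧ ∀ b, B ≤ b → steklovCubed b L ϱ ≤ c * (2 * b ^ 3 / ϱ ^ 3) := by
  have hc1 : 0 < c - 1 := by linarith
  set M : ℝ := max 1 (16 * (2 + c) / (c - 1)) with hM
  have hM1 : 1 ≤ M := le_max_left _ _
  refine ⟨M / L, by positivity, fun b hb => ?_⟩
  have hxM : M ≤ b * L := (div_le_iff₀ hL).1 hb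
  have hb0 : 0 < b := lt_of_lt_of_le (by positivity) hb
  unfold steklovCubed
  rw [← mul_pow b L 2, mul_comm c]
  refine mul_le_mul_of_nonneg_left ?_ (by positivity)
  generalize b * L = x at hxM
  have hx1 : 1 ≤ x := hM1.trans hxM
  have hx : 0 < x := by linarith
  have hd := aux_den_pos hx
  rw [div_le_iff₀ hd]
  have h1 : 16 * (2 + c) ≤ (c - 1) * x := by
    have : 16 * (2 + c) / (c - 1) ≤ x := (le_max_right _ _).trans hxM
    rw [div_le_iff₀ hc1] at this
    linarith
  have he := Real.quadratic_le_exp_of_nonneg hx.le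
  have hen : Real.exp (-x) ≤ 1 := Real.exp_le_one_iff.2 (by linarith)
  have hep := Real.exp_pos (-x)
  have hmul : Real.exp x * Real.exp (-x) = 1 := by rw [← Real.exp_add]; simp
  have hs : Real.sinh x = (Real.exp x - Real.exp (-x)) / 2 := Real.sinh_eq x
  have hch : Real.cosh x = Real.sinh x + Real.exp (-x) := by
    rw [Real.cosh_eq, hs]; ring
  have hs2 : x ^ 2 / 4 ≤ Real.sinh x := by rw [hs]; linarith
  have hs4 : x ^ 4 / 16 ≤ Real.sinh x ^ 2 := by
    have := pow_le_pow_left₀ (by positivity) hs2 2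
    calc x ^ 4 / 16 = (x ^ 2 / 4) ^ 2 := by ring
      _ ≤ _ := this
  have hse : Real.sinh x * Real.exp (-x) ≤ 1 := by rw [hs]; nlinarith
  have h2 : 16 * (2 + c) * x ^ 2 ≤ (c - 1) * x ^ 4 := by
    calc 16 * (2 + c) * x ^ 2 ≤ (c - 1) * x * x ^ 2 := by gcongr
      _ ≤ (c - 1) * x * x ^ 2 * x := le_mul_of_one_le_right (by positivity) hx1
      _ = _ := by ring
  have h3 : (c - 1) * (x ^ 4 / 16) ≤ (c - 1) * Real.sinh x ^ 2 := by gcongr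
  have h4 : 1 + x ≤ 2 * x ^ 2 := by nlinarith
  rw [hch]
  nlinarith

lemma aux_sandwich_limit {N A : ℝ → ℝ} {k : ℕ} (hk : 1 ≤ k) {V r : ℝ} (hr : 0 < r)
    (hN : Tendsto (fun x => N x / x ^ k) atTop (nhds V))
    (hup : ∀ τ, 0 < τ → A τ ≤ N (r * τ))
    (hlow : ∀ c : ℝ, 1 < c → ∃ C : ℝ, ∀ τ, 0 < τ → N (r / c * τ) - C ≤ A τ) :
    Tendsto (fun τ => A τ / τ ^ k) atTop (nhds (V * r ^ k)) := by
  have hscale : ∀ d : ℝ, 0 < d →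
      Tendsto (fun τ => N (d * τ) / τ ^ k) atTop (nhds (V * d ^ k)) := by
    intro d hd
    have h1 := (hN.comp (tendsto_id.const_mul_atTop hd)).mul_const (d ^ k)
    refine h1.congr' ?_
    filter_upwards [eventually_gt_atTop 0] with τ hτ
    simp only [Function.comp, id]
    rw [mul_pow]
    field_simp
  rw [tendsto_order]
  constructor
  · intro u hu
    have hcont : Tendsto (fun c : ℝ => V * (r / c) ^ k) (nhdsWithin 1 (Set.Ioi 1))
        (nhds (V * r ^ k)) := by
      have : ContinuousAt (fun c : ℝ => V * (r / c) ^ k) 1 := by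
        fun_prop (disch := norm_num)
      have h2 := this.tendsto
      simp only [div_one] at h2
      exact h2.mono_left nhdsWithin_le_nhds
    obtain ⟨c, hcu, hc⟩ := ((hcont.eventually (lt_mem_nhds hu)).and
      self_mem_nhdsWithin).exists
    have hc : 1 < c := hc
    obtain ⟨C, hC⟩ := hlow c hc
    have hz : Tendsto (fun τ : ℝ => C / τ ^ k) atTop (nhds 0) :=
      tendsto_const_nhds.div_atTop (tendsto_pow_atTop (by omega))
    have h3 := (hscale (r / c) (by positivity)).sub hz
    rw [sub_zero] at h3
    filter_upwards [h3.eventually (lt_mem_nhds hcu), eventually_gt_atTop 0] with τ h4 hτ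
    refine h4.trans_le ?_
    rw [← sub_div]
    have := hC τ hτ
    gcongr
  · intro u hu
    filter_upwards [(hscale r hr).eventually (gt_mem_nhds hu), eventually_gt_atTop 0]
      with τ h4 hτ
    refine lt_of_le_of_lt ?_ h4
    have := hup τ hτ
    gcongr

/-- Weyl-type asymptotics of the counting function. -/
theorem box_counting_function_asymptotics_free
    (k : ℕ) (hk : 1 ≤ k) (l : Fin (k + 1) → ℝ) (hl : ∀ i, 0 < l i)
    (hln : ∀ i : Fin k, l i.castSucc < l (Fin.last k))
    (ϱ : ℝ) (hϱ : 0 < ϱ) :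
    Tendsto (fun τ : ℝ =>
        (Set.ncard {m : Fin k → ℕ |
            1 ≤ ∑ i, m i ∧
            steklovCubed (beta l m) (l (Fin.last k)) ϱ ≤ τ ^ 3} : ℝ) / τ ^ k)
      atTop
      (nhds ((MeasureTheory.volume
          (Metric.ball (0 : EuclideanSpace ℝ (Fin k)) 1)).toReal *
        (((16 : ℝ) ^ ((1 : ℝ) / 3) * Real.pi)⁻¹) ^ k *
        (∏ i : Fin k, l i.castSucc) * ϱ ^ k)) := by
  have hL : 0 < l (Fin.last k) := hl _
  set q : ℝ := (16 : ℝ) ^ ((1 : ℝ) / 3) with hq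
  have hq0 : 0 < q := by positivity
  have hq3 : q ^ 3 = 16 := by
    rw [hq, ← Real.rpow_natCast, ← Real.rpow_mul (by norm_num)]
    norm_num
  -- `r = ϱ / 2^{1/3}`
  set r : ℝ := 2 * ϱ / q with hr
  have hr0 : 0 < r := by positivity
  have hr3 : 2 * r ^ 3 = ϱ ^ 3 := by
    rw [hr, div_pow, hq3]; ring
  have hF : ∀ b : ℝ, 2 * b ^ 3 / ϱ ^ 3 = (b / r) ^ 3 := by
    intro b
    rw [← hr3, div_pow b r, mul_div_mul_left _ _ two_ne_zero]
  have hpos : ∀ m : Fin k → ℕ, 1 ≤ ∑ i, m i → 0 < beta l m := by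
    intro m hm
    obtain ⟨i, -, hi⟩ := Finset.exists_ne_zero_of_sum_ne_zero
      (show ∑ i, m i ≠ 0 by omega)
    unfold beta
    apply Real.sqrt_pos.2
    refine Finset.sum_pos' (fun _ _ => sq_nonneg _) ⟨i, Finset.mem_univ _, ?_⟩
    have h1 : 0 < (m i : ℝ) := by exact_mod_cast Nat.pos_of_ne_zero hi
    have h2 := hl i.castSucc
    have := Real.pi_pos
    positivity
  have hsub : ∀ τ : ℝ, 0 < τ → {m : Fin k → ℕ | 1 ≤ ∑ i, m i ∧
      steklovCubed (beta l m) (l (Fin.last k)) ϱ ≤ τ ^ 3} ⊆ {m | beta l m ≤ r * τ} := by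
    rintro τ hτ m ⟨hm, hle⟩
    have h1 := (aux_lower (hpos m hm) hL hϱ).trans hle
    rw [hF] at h1
    have h2 : beta l m / r ≤ τ := le_of_pow_le_pow_left₀ (by norm_num) hτ.le h1
    rw [div_le_iff₀ hr0] at h2
    change beta l m ≤ r * τ
    linarith
  have main := aux_sandwich_limit (N := fun x => (Set.ncard {m : Fin k → ℕ | beta l m ≤ x} : ℝ))
    (A := fun τ => (Set.ncard {m : Fin k → ℕ | 1 ≤ ∑ i, m i ∧
            steklovCubed (beta l m) (l (Fin.last k)) ϱ ≤ τ ^ 3} : ℝ)) hk hr0 (aux_count l hl)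
    (fun τ hτ => by exact_mod_cast Set.ncard_le_ncard (hsub τ hτ) (aux_finite l hl _))
    (by
      intro c hc
      obtain ⟨B, hB, hBb⟩ := aux_upper hL hϱ (one_lt_pow₀ hc (show 3 ≠ 0 by norm_num))
      refine ⟨(Set.ncard {m : Fin k → ℕ | beta l m ≤ B} : ℝ), fun τ hτ => ?_⟩
      have hcov : {m : Fin k → ℕ | beta l m ≤ r / c * τ} ⊆
          {m : Fin k → ℕ | 1 ≤ ∑ i, m i ∧
            steklovCubed (beta l m) (l (Fin.last k)) ϱ ≤ τ ^ 3} ∪ {m | beta l m ≤ B} := by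
        intro m hm
        by_cases hmB : beta l m ≤ B
        · exact Or.inr hmB
        · left
          push Not at hmB
          have hb0 : 0 < beta l m := hB.trans hmB
          constructor
          · by_contra hcon
            have h0 : ∑ i, m i = 0 := by omega
            have h1 : ∀ i, m i = 0 := by simpa using h0
            simp [beta, h1] at hb0
          · refine (hBb _ hmB.le).trans ?_
            rw [hF, ← mul_pow]
            have hm : beta l m ≤ r / c * τ := hm
            refine pow_le_pow_left₀ (by positivity) ?_ 3
            calc c * (beta l m / r) ≤ c * (r / c * τ / r) := by gcongr
              _ = τ := by field_simp
      have h1 := Set.ncard_le_ncard hcov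
        (((aux_finite l hl _).subset (hsub τ hτ)).union (aux_finite l hl B))
      have h2 := h1.trans (Set.ncard_union_le _ _)
      rw [sub_le_iff_le_add]
      exact_mod_cast h2)
  convert main using 2
  rw [Finset.prod_div_distrib, Finset.prod_const, Finset.card_univ, Fintype.card_fin, hr,
    inv_div, div_pow, mul_pow, inv_pow, inv_pow, mul_pow]
  field_simp
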